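/- Conjugate gradient orthogonality: Let R be a commutative real Riesz algebra, A an n×n positive definite symmetric matrix over R, b ∈ Rⁿ, and x₀ ∈ Rⁿ. Define r₀ = p₀ = b - A·x₀, and recursively x_{k} = x_{k-1} + α_{k-1}p_{k-1}, r_k = b - A·x_k, p_k = r_k - (r_kᵀAp_{k-1})(p_{k-1}ᵀAp_{k-1})⁻¹ p_{k-1}, α_k = (r_kᵀp_k)(p_kᵀAp_k)⁻¹, assuming all the quantities p_iᵀAp_i are invertible in R for i ≤ k. Then p_iᵀ r_j = 0 for all 0 ≤ i < j ≤ k. -/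

import Mathlib

open Matrix

/-- `a` is strictly positive: nonnegative, nonzero and invertible. -/
def SPos {R : Type*} [Ring R] [PartialOrder R] (a : R) : Prop :=
  0 ≤ a ∧ a ≠ 0 ∧ IsUnit a

/-- A Riesz algebra: a partially ordered, strictly archimedean, lattice-ordered
commutative ℝ-algebra. -/
class RieszAlgebra (R : Type*) extends CommRing R, Lattice R, Algebra ℝ R where
  add_le_add_left : ∀ a b : R, a ≤ b → ∀ c : R, c + a ≤ c + b
  mul_nonneg : ∀ a b : R, 0 ≤ a → 0 ≤ b → 0 ≤ a * b
  sq_nonneg : ∀ a : R, 0 ≤ a * a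
  smul_nonneg : ∀ (t : ℝ) (a : R), 0 ≤ t → 0 ≤ a → 0 ≤ t • a
  strictly_archimedean : ∀ a b : R, (∀ t : ℝ, SPos (a - t • b)) → b = 0

/-- A real Riesz algebra: every strictly positive element has a (unique) strictly
positive square root. -/
class RealRieszAlgebra (R : Type*) extends RieszAlgebra R where
  sqrt : R → R
  sqrt_spos : ∀ a : R, SPos a → SPos (sqrt a)
  sqrt_sq : ∀ a : R, SPos a → sqrt a * sqrt a = a
  sqrt_unique : ∀ a b : R, SPos a → SPos b → b * b = a → b = sqrt a

theorem aux_dot_self {R : Type*} [RealRieszAlgebra R] {n : ℕ}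
    (hf : ∀ c : R, c * c = 0 → c = 0) (v : Fin n → R) (h : v ⬝ᵥ v = 0) : v = 0 := by
  haveI : IsOrderedAddMonoid R :=
    { add_le_add_left := fun a b hab c => by
        have := RieszAlgebra.add_le_add_left a b hab c
        simpa only [add_comm] using this }
  unfold dotProduct at h
  rw [Finset.sum_eq_zero_iff_of_nonneg (fun i _ => RieszAlgebra.sq_nonneg (v i))] at h
  funext i
  exact hf _ (h i (Finset.mem_univ i))

/-- CGM orthogonality: with the conjugate gradient recursion feasible up to step `k`
(all `pⱼᵀApⱼ` invertible), `pᵢᵀ rⱼ = 0` for `0 ≤ i < j ≤ k`. -/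
theorem stmt13 {R : Type*} [RealRieszAlgebra R] {n : ℕ}
    (A : Matrix (Fin n) (Fin n) R) (hsymm : Aᵀ = A)
    (hpd : ∀ v : Fin n → R, v ≠ 0 → SPos (v ⬝ᵥ A *ᵥ v))
    (b : Fin n → R) (x r p : ℕ → Fin n → R) (α : ℕ → R) (k : ℕ)
    (hp0 : p 0 = b - A *ᵥ x 0)
    (hunit : ∀ j ≤ k, IsUnit (p j ⬝ᵥ A *ᵥ p j))
    (hx : ∀ j < k, x (j + 1) = x j + α j • p j)
    (hr : ∀ j ≤ k, r j = b - A *ᵥ x j)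
    (hp : ∀ j < k, p (j + 1) = r (j + 1) -
      ((r (j + 1) ⬝ᵥ A *ᵥ p j) * Ring.inverse (p j ⬝ᵥ A *ᵥ p j)) • p j)
    (hα : ∀ j ≤ k, α j = (r j ⬝ᵥ p j) * Ring.inverse (p j ⬝ᵥ A *ᵥ p j)) :
    ∀ i j : ℕ, i < j → j ≤ k → p i ⬝ᵥ r j = 0 := by
  rcases Nat.eq_zero_or_pos n with hn | hn
  · subst hn
    intro i j _ _
    simp [dotProduct]
  by_cases h10 : (1 : R) = 0
  · intro i j _ _
    rw [← mul_one (p i ⬝ᵥ r j), h10, mul_zero]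
  have hfield : ∀ c : R, c ≠ 0 → IsUnit c := by
    intro c hc
    have hv : (Pi.single (⟨0, hn⟩ : Fin n) c : Fin n → R) ≠ 0 := by
      simpa using hc
    have h := (hpd _ hv).2.2
    rw [single_dotProduct] at h
    exact isUnit_of_mul_isUnit_left h
  have hcancel : ∀ a c : R, a ≠ 0 → a * c = 0 → c = 0 := by
    intro a c ha h
    exact (hfield a ha).mul_right_eq_zero.mp h
  have hsq : ∀ c : R, c * c = 0 → c = 0 := by
    intro c hc
    by_contra h
    exact h (hcancel c c h hc)
  have hB : ∀ u v : Fin n → R, u ⬝ᵥ A *ᵥ v = v ⬝ᵥ A *ᵥ u := by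
    intro u v
    rw [dotProduct_mulVec, ← mulVec_transpose, hsymm, dotProduct_comm]
  have hrr : ∀ j < k, r (j + 1) = r j - α j • A *ᵥ p j := by
    intro j hj
    rw [hr (j + 1) hj, hr j hj.le, hx j hj, mulVec_add, mulVec_smul]
    abel
  have hinv : ∀ j ≤ k, Ring.inverse (p j ⬝ᵥ A *ᵥ p j) * (p j ⬝ᵥ A *ᵥ p j) = 1 :=
    fun j hj => Ring.inverse_mul_cancel _ (hunit j hj)
  have hrw : ∀ (w : Fin n → R) (i : ℕ), i ≤ k → (∀ m ≤ i, p m ⬝ᵥ w = 0) → r i ⬝ᵥ w = 0 := by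
    intro w i hi h
    cases i with
    | zero => rw [hr 0 hi, ← hp0]; exact h 0 le_rfl
    | succ i =>
      have h1 := h (i + 1) le_rfl
      rw [hp i hi, sub_dotProduct, smul_dotProduct, h i (Nat.le_succ i), smul_zero, sub_zero] at h1
      exact h1
  suffices H : ∀ j, j ≤ k → (∀ i < j, p i ⬝ᵥ r j = 0) ∧ (∀ i < j, p i ⬝ᵥ A *ᵥ p j = 0) from
    fun i j hij hj => (H j hj).1 i hij
  intro j
  induction j using Nat.strong_induction_on with
  | _ j ih =>
  cases j with
  | zero => exact fun _ => ⟨fun i hi => absurd hi (Nat.not_lt_zero i),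
      fun i hi => absurd hi (Nat.not_lt_zero i)⟩
  | succ j =>
  intro hj
  have hjk : j ≤ k := (Nat.le_succ j).trans hj
  obtain ⟨ih1, ih2⟩ := ih j (Nat.lt_succ_self j) hjk
  have key1 : ∀ i < j + 1, p i ⬝ᵥ r (j + 1) = 0 := by
    intro i hi
    rw [hrr j hj, dotProduct_sub, dotProduct_smul, smul_eq_mul]
    rcases Nat.lt_succ_iff_lt_or_eq.mp hi with h | h
    · rw [ih1 i h, ih2 i h, mul_zero, sub_zero]
    · subst h
      rw [hα i hjk, mul_assoc, hinv i hjk, mul_one, dotProduct_comm, sub_self]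
  refine ⟨key1, ?_⟩
  intro i hi
  rw [hp j hj, mulVec_sub, mulVec_smul, dotProduct_sub, dotProduct_smul, smul_eq_mul]
  rcases Nat.lt_succ_iff_lt_or_eq.mp hi with h | h
  · rw [ih2 i h, mul_zero, sub_zero]
    have hik : i < k := lt_of_lt_of_le h hjk
    have hr0 : ∀ m ≤ j, r m ⬝ᵥ r (j + 1) = 0 := fun m hm =>
      hrw _ m (hm.trans hjk) (fun l hl => key1 l (by omega))
    have hz : α i * (p i ⬝ᵥ A *ᵥ r (j + 1)) = 0 := by
      have h1 := hr0 (i + 1) h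
      rw [hrr i hik, sub_dotProduct, smul_dotProduct, hr0 i h.le, zero_sub, neg_eq_zero,
        smul_eq_mul] at h1
      rw [hB, dotProduct_comm]
      exact h1
    refine hcancel _ _ ?_ hz
    intro hα0
    -- `α i = 0` forces `r i = 0`, hence `p i = 0`, contradicting invertibility
    have hrp : r i ⬝ᵥ p i = 0 := by
      have h1 := hα i hik.le
      rw [hα0] at h1
      have h2 := congrArg (fun t => t * (p i ⬝ᵥ A *ᵥ p i)) h1
      simp only [zero_mul, mul_assoc, hinv i hik.le, mul_one] at h2
      exact h2.symm
    have hri : r i = 0 := by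
      apply aux_dot_self hsq
      apply hrw _ i hik.le
      intro m hm
      rcases hm.lt_or_eq with hm | hm
      · exact (ih i (by omega) hik.le).1 m hm
      · rw [hm, dotProduct_comm]; exact hrp
    have hpi : p i = 0 := by
      cases i with
      | zero => rw [hp0, ← hr 0 (Nat.zero_le k), hri]
      | succ i => rw [hp i (by omega), hri]; simp
    have hu := hunit i hik.le
    rw [hpi, zero_dotProduct] at hu
    have h01 : (0 : R) = 1 := isUnit_zero_iff.mp hu
    exact h10 h01.symm
  · subst h
    rw [mul_assoc, hinv i hjk, mul_one, hB, sub_self]
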